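/- Let X be a metric space, x₀ ∈ X, k ≥ 1, and let g and h be integral (k,k)-quasi-geodesic rays in X with g(1) = x₀. If for every m ≥ 1 the m-cone C_X(x₀,k,k,g,m) contains h(i) for infinitely many i, then for every geometrically slowly-oscillating function f : X → ℝ one has lim_{i→∞} f(g(i)) = lim_{i→∞} f(h(i)); that is, g and h converge to the same point of the quasi-geodesic boundary. -/

import Mathlib

open Filter Metric

/-- `g` is an integral `(q,Q)`-quasi-geodesic on the index set `s ⊆ ℕ`:
`|x − y|/q − Q ≤ d(g x, g y) ≤ q·|x − y| + Q` for all `x, y ∈ s`. -/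
def IsQGOn {X : Type*} [MetricSpace X] (q Q : ℝ) (g : ℕ → X) (s : Set ℕ) : Prop :=
  ∀ x ∈ s, ∀ y ∈ s,
    |(x : ℝ) - (y : ℝ)| / q - Q ≤ dist (g x) (g y) ∧
    dist (g x) (g y) ≤ q * |(x : ℝ) - (y : ℝ)| + Q

/-- An integral `(q,Q)`-quasi-geodesic ray: domain all positive integers. -/
def IsQGRay {X : Type*} [MetricSpace X] (q Q : ℝ) (g : ℕ → X) : Prop :=
  IsQGOn q Q g {i | 1 ≤ i}

/-- The `m`-cone `C_X(x₀,q,Q,g,m)`: all `x ∈ X` reachable as `h i`, `i ≥ m`, by an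
integral `(q,Q)`-quasi-geodesic `h` starting at `x₀` and agreeing with `g` for indices `≤ m`. -/
def Cone {X : Type*} [MetricSpace X] (x₀ : X) (q Q : ℝ) (g : ℕ → X) (m : ℕ) : Set X :=
  {x | ∃ (h : ℕ → X) (n i : ℕ), IsQGOn q Q h (Set.Icc 1 n) ∧ h 1 = x₀ ∧
      (∀ j, 1 ≤ j → j ≤ m → h j = g j) ∧ m ≤ i ∧ i ≤ n ∧ h i = x}

/-- `f` is slowly-oscillating: whenever `d(x₀,xₙ) → ∞` and `d(xₙ,yₙ) < M` for all `n ≥ 1`,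
then `d(f xₙ, f yₙ) → 0`. -/
def SlowlyOscillating {X E : Type*} [MetricSpace X] [PseudoMetricSpace E] (f : X → E) : Prop :=
  ∀ (x₀ : X) (x y : ℕ → X),
    Tendsto (fun n => dist x₀ (x n)) atTop atTop →
    (∃ M > (0 : ℝ), ∀ n, 1 ≤ n → dist (x n) (y n) < M) →
    Tendsto (fun n => dist (f (x n)) (f (y n))) atTop (nhds 0)

/-- `f` is geometrically slowly-oscillating: bounded, continuous, slowly-oscillating, and
for every `ε > 0`, `k ≥ 1`, `x₀` and integral `(k,k)`-quasi-geodesic ray `g` at `x₀`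
there is `m ≥ 1` with `diam (f '' C_X(x₀,k,k,g,m)) < ε`. -/
def GeomSO {X E : Type*} [MetricSpace X] [PseudoMetricSpace E] (f : X → E) : Prop :=
  Bornology.IsBounded (Set.range f) ∧ Continuous f ∧ SlowlyOscillating f ∧
    ∀ ε > (0 : ℝ), ∀ k : ℝ, 1 ≤ k → ∀ (x₀ : X) (g : ℕ → X),
      IsQGRay k k g → g 1 = x₀ →
      ∃ m : ℕ, 1 ≤ m ∧ Metric.diam (f '' Cone x₀ k k g m) < ε

/-- Every bounded subset of `X` can be covered by finitely many sets of diameter less than `M`. -/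
def CoverM (X : Type*) [MetricSpace X] (M : ℝ) : Prop :=
  ∀ B : Set X, Bornology.IsBounded B →
    ∃ S : Finset (Set X), (∀ s ∈ S, Metric.diam s < M) ∧ B ⊆ ⋃ s ∈ S, (s : Set X)

/-- `X` is integrally `(q,Q)`-quasi-geodesic: every two points are joined by a finite
integral `(q,Q)`-quasi-geodesic. -/
def IntegrallyQGWith (X : Type*) [MetricSpace X] (q Q : ℝ) : Prop :=
  ∀ x y : X, ∃ (g : ℕ → X) (n : ℕ), 1 ≤ n ∧ IsQGOn q Q g (Set.Icc 1 n) ∧ g 1 = x ∧ g n = y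

/-- The Gromov product `⟨x,y⟩_a = (d(x,a) + d(y,a) − d(x,y))/2`. -/
noncomputable def gromovProd {X : Type*} [MetricSpace X] (a x y : X) : ℝ :=
  (dist x a + dist y a - dist x y) / 2

/-- `X` is a geodesic space: any two points are joined by a geodesic segment. -/
def IsGeodesicSpace (X : Type*) [MetricSpace X] : Prop :=
  ∀ x y : X, ∃ γ : ℝ → X, γ 0 = x ∧ γ (dist x y) = y ∧
    ∀ s ∈ Set.Icc (0 : ℝ) (dist x y), ∀ t ∈ Set.Icc (0 : ℝ) (dist x y),
      dist (γ s) (γ t) = |s - t|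

theorem IsQGOn.mono {X : Type*} [MetricSpace X] {q Q : ℝ} {g : ℕ → X} {s t : Set ℕ}
    (hg : IsQGOn q Q g t) (hst : s ⊆ t) : IsQGOn q Q g s :=
  fun x hx y hy => hg x (hst hx) y (hst hy)

theorem IsQGRay.mem_cone {X : Type*} [MetricSpace X] {x₀ : X} {q Q : ℝ} {g : ℕ → X} {m i : ℕ}
    (hg : IsQGRay q Q g) (hg1 : g 1 = x₀) (hmi : m ≤ i) : g i ∈ Cone x₀ q Q g m :=
  ⟨g, i, i, hg.mono fun _ hj => hj.1, hg1, fun _ _ _ => rfl, hmi, le_rfl, rfl⟩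

namespace GeomSO

variable {X E : Type*} [MetricSpace X] [PseudoMetricSpace E] {x₀ : X} {k ε : ℝ} {g : ℕ → X}
  {f : X → E}

theorem exists_forall_mem_cone_dist_lt (hf : GeomSO f) (hε : 0 < ε) (hk : 1 ≤ k)
    (hg : IsQGRay k k g) (hg1 : g 1 = x₀) :
    ∃ m, 1 ≤ m ∧ ∀ x ∈ Cone x₀ k k g m, ∀ y ∈ Cone x₀ k k g m, dist (f x) (f y) < ε := by
  obtain ⟨hbounded, -, -, hcone⟩ := hf
  obtain ⟨m, hm, hdiam⟩ := hcone ε hε k hk x₀ g hg hg1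
  -- `Metric.diam` is `0` on unbounded sets, so `hdiam` says nothing without this.
  have himage : Bornology.IsBounded (f '' Cone x₀ k k g m) :=
    hbounded.subset (Set.image_subset_range f _)
  exact ⟨m, hm, fun x hx y hy =>
    (dist_le_diam_of_mem himage (Set.mem_image_of_mem f hx) (Set.mem_image_of_mem f hy)).trans_lt
      hdiam⟩

theorem exists_forall_mem_cone_dist_limit_le {L : E} (hf : GeomSO f) (hε : 0 < ε)
    (hk : 1 ≤ k) (hg : IsQGRay k k g) (hg1 : g 1 = x₀)
    (hL : Tendsto (fun i => f (g i)) atTop (nhds L)) :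
    ∃ m, 1 ≤ m ∧ ∀ x ∈ Cone x₀ k k g m, dist L (f x) ≤ ε := by
  obtain ⟨m, hm, hdist⟩ := hf.exists_forall_mem_cone_dist_lt hε hk hg hg1
  refine ⟨m, hm, fun x hx => le_of_tendsto (hL.dist tendsto_const_nhds) ?_⟩
  filter_upwards [eventually_ge_atTop m] with i hmi
  exact (hdist (g i) (hg.mem_cone hg1 hmi) x hx).le

end GeomSO

theorem stmt_10_general {X E ι : Type*} [MetricSpace X] [MetricSpace E] {x₀ : X} {k : ℝ}
    (hk : 1 ≤ k) {g : ℕ → X} (hg : IsQGRay k k g) (hg1 : g 1 = x₀) {l : Filter ι} {h : ι → X}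
    (hfreq : ∀ m : ℕ, 1 ≤ m → ∃ᶠ i in l, h i ∈ Cone x₀ k k g m)
    {f : X → E} (hf : GeomSO f) {Lg Lh : E}
    (hLg : Tendsto (fun i => f (g i)) atTop (nhds Lg))
    (hLh : Tendsto (fun i => f (h i)) l (nhds Lh)) :
    Lg = Lh := by
  refine eq_of_forall_dist_le fun ε hε => ?_
  obtain ⟨m, hm, hcone⟩ := hf.exists_forall_mem_cone_dist_limit_le hε hk hg hg1 hLg
  exact le_of_tendsto_of_frequently (tendsto_const_nhds.dist hLh)
    ((hfreq m hm).mono fun i hi => hcone (h i) hi)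

/-- Lemma 4.8: if every m-cone of g contains infinitely many points of h, then g and h
converge to the same point of the quasi-geodesic boundary. -/
theorem stmt_10 {X : Type*} [MetricSpace X] (x₀ : X) (k : ℝ) (hk : 1 ≤ k)
    (g h : ℕ → X) (hg : IsQGRay k k g) (hh : IsQGRay k k h) (hg1 : g 1 = x₀)
    (hinf : ∀ m : ℕ, 1 ≤ m → {i : ℕ | h i ∈ Cone x₀ k k g m}.Infinite)
    (f : X → ℝ) (hf : GeomSO f) (Lg Lh : ℝ)
    (hLg : Tendsto (fun i => f (g i)) atTop (nhds Lg))
    (hLh : Tendsto (fun i => f (h i)) atTop (nhds Lh)) :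
    Lg = Lh :=
  stmt_10_general hk hg hg1 (fun m hm => Nat.frequently_atTop_iff_infinite.2 (hinf m hm)) hf hLg hLh
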